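/- On a Poisson manifold $P$ with Poisson bivector $\pi$, the bracket on one-forms defined by $[\omega,\theta] = L_{X_\omega}\theta - L_{X_\theta}\omega - d(\pi(\omega,\theta))$, where $X_\omega = \pi^\#\omega$, satisfies the Jacobi identity, making $\Omega^1(P)$ a Lie algebra. -/

import Mathlib

/-- An abstract model of the Cartan calculus of a Poisson manifold `P`.
Here `F` plays the role of the algebra `C^∞(P)` of smooth functions, `V` of the
`C^∞(P)`-module of vector fields, and `Ω1`, `Ω2` of the spaces of differential
1- and 2-forms.  The fields record the standard operations of differential
calculus (action of vector fields on functions, Lie bracket of vector fields,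
exterior derivative, pairing of forms and vector fields, interior product, Lie
derivative via Cartan's magic formula) together with their standard identities,
and the data of a Poisson bivector `π` through its induced bundle map
`sharp = π^♯` (so that `π(ω,θ) = ⟨π^♯ω, θ⟩`), the antisymmetry of `π`, the
Jacobi identity for the Poisson bracket `{f,g} = π(df,dg)`, and the fact that
`π^♯` intertwines hamiltonian one-forms with hamiltonian vector fields. -/
structure PoissonCalc (F V Ω1 Ω2 : Type*) [CommRing F] [Algebra ℝ F]
    [AddCommGroup V] [Module F V]
    [AddCommGroup Ω1] [Module ℝ Ω1] [Module F Ω1]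
    [AddCommGroup Ω2] [Module ℝ Ω2] where
  /-- action of a vector field on a function, `X(f)` -/
  act : V → F → F
  act_add : ∀ X f g, act X (f + g) = act X f + act X g
  act_mul : ∀ X f g, act X (f * g) = f * act X g + g * act X f
  act_addV : ∀ X Y f, act (X + Y) f = act X f + act Y f
  act_smulV : ∀ (f : F) (X : V) (g : F), act (f • X) g = f * act X g
  /-- Lie bracket of vector fields -/
  lieV : V → V → V
  act_lieV : ∀ X Y f, act (lieV X Y) f = act X (act Y f) - act Y (act X f)
  /-- exterior derivative on functions -/
  d0 : F →ₗ[ℝ] Ω1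
  d0_const : ∀ c : ℝ, d0 (algebraMap ℝ F c) = 0
  /-- exterior derivative on one-forms -/
  d1 : Ω1 →ₗ[ℝ] Ω2
  d1_d0 : ∀ f, d1 (d0 f) = 0
  /-- evaluation of a one-form on a vector field, `ω(X)` -/
  pair : V → Ω1 → F
  pair_addV : ∀ X Y ω, pair (X + Y) ω = pair X ω + pair Y ω
  pair_add : ∀ X ω θ, pair X (ω + θ) = pair X ω + pair X θ
  pair_smulV : ∀ (f : F) (X : V) (ω : Ω1), pair (f • X) ω = f * pair X ω
  pair_smul : ∀ (X : V) (f : F) (ω : Ω1), pair X (f • ω) = f * pair X ω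
  pair_d0 : ∀ X f, pair X (d0 f) = act X f
  /-- interior product of a vector field with a two-form -/
  ι2 : V → Ω2 → Ω1
  /-- Lie derivative of one-forms -/
  L : V → Ω1 → Ω1
  /-- Cartan's magic formula `L_X = ι_X d + d ι_X` -/
  cartan : ∀ X ω, L X ω = ι2 X (d1 ω) + d0 (pair X ω)
  L_lieV : ∀ X Y ω, L (lieV X Y) ω = L X (L Y ω) - L Y (L X ω)
  L_pair : ∀ X Y ω, act X (pair Y ω) = pair Y (L X ω) + pair (lieV X Y) ω
  L_smul : ∀ (X : V) (f : F) (ω : Ω1), L X (f • ω) = f • L X ω + act X f • ω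
  /-- one-forms are generated over functions by exact one-forms -/
  span_exact : ∀ ω : Ω1, ω ∈ Submodule.span F (Set.range d0)
  /-- the bundle map `π^♯ : T^*P → TP` induced by the Poisson bivector -/
  sharp : Ω1 → V
  sharp_add : ∀ ω θ, sharp (ω + θ) = sharp ω + sharp θ
  sharp_smul : ∀ (f : F) (ω : Ω1), sharp (f • ω) = f • sharp ω
  /-- antisymmetry of the Poisson bivector: `π(ω,θ) = -π(θ,ω)` -/
  pair_sharp_skew : ∀ ω θ, pair (sharp ω) θ = - (pair (sharp θ) ω)
  /-- the Jacobi identity for the Poisson bracket `{f,g} = π(df,dg)` -/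
  jacobi : ∀ f g h : F,
    pair (sharp (d0 f)) (d0 (pair (sharp (d0 g)) (d0 h))) =
      pair (sharp (d0 (pair (sharp (d0 f)) (d0 g)))) (d0 h) +
      pair (sharp (d0 g)) (d0 (pair (sharp (d0 f)) (d0 h)))
  /-- `π^♯ d{f,g} = [π^♯ df, π^♯ dg]`, i.e. `X_{{f,g}} = [X_f, X_g]` -/
  sharp_hamiltonian : ∀ f g : F,
    sharp (d0 (pair (sharp (d0 f)) (d0 g))) = lieV (sharp (d0 f)) (sharp (d0 g))

namespace PoissonCalc

variable {F V Ω1 Ω2 : Type*} [CommRing F] [Algebra ℝ F]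
    [AddCommGroup V] [Module F V]
    [AddCommGroup Ω1] [Module ℝ Ω1] [Module F Ω1]
    [AddCommGroup Ω2] [Module ℝ Ω2]
variable (C : PoissonCalc F V Ω1 Ω2)

/-- The Poisson bivector evaluated on two one-forms: `π(ω,θ) = ⟨π^♯ω, θ⟩`. -/
def piv (ω θ : Ω1) : F := C.pair (C.sharp ω) θ

/-- The bracket of one-forms on a Poisson manifold:
`[ω,θ] = L_{X_ω}θ - L_{X_θ}ω - d(π(ω,θ))`, where `X_ω = π^♯ω`. -/
def kbr (ω θ : Ω1) : Ω1 :=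
  C.L (C.sharp ω) θ - C.L (C.sharp θ) ω - C.d0 (C.piv ω θ)

end PoissonCalc

/-! The one point that is not immediate is additivity of `L X`: it is not a field of the structure.
It follows from the vanishing lemma below. -/

theorem hom_chain {F N M : Type*} [CommRing F] [AddCommGroup N] [Module F N]
    [AddCommGroup M] [Module F M] (l : N → M) (hs : ∀ (f : F) v, l (f • v) = f • l v)
    (n : ℕ) (y : ℕ → F) (hy : y n = 1) (e : ℕ → N) (he : ∀ i v, l (v + e i) = l v)
    (D : F) (Y d : ℕ → F) (hY : ∀ i, i < n → Y i = y i * Y (i + 1))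
    (hD : ∀ i, i < n → D = d i * Y (i + 1)) :
    ∀ i, i ≤ n → ∃ (p q k : F) (A B : N),
      (∀ v, l (p • v - A) = p • l v) ∧ (∀ v, l (q • v - B) = q • l v) ∧
      A - B = D • ∑ j ∈ Finset.range i, y j • e j ∧ p - q = D * y i ∧ q = 1 + Y i * k := by
  intro i
  induction i with
  | zero =>
    intro _
    refine ⟨1 + D * y 0, 1, 0, 0, 0, ?_, ?_, ?_, ?_, ?_⟩
    · intro v; rw [sub_zero, hs]
    · intro v; rw [sub_zero, hs]
    · simp
    · ring
    · ring
  | succ i ih =>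
    intro hi
    have hi' : i < n := hi
    obtain ⟨p, q, k, A, B, hp, hq, hAB, hpq, hk⟩ := ih hi'.le
    have hsub : ∀ v, l (v - e i) = l v := fun v => by
      have := he i (v - e i); rw [sub_add_cancel] at this; exact this.symm
    have h1 := hY i hi'
    have h2 := hD i hi'
    obtain ⟨u, hu⟩ : ∃ u, u = -(Y (i+1) * k) * y (i+1) + q := ⟨_, rfl⟩
    obtain ⟨v, hv⟩ : ∃ v, v = u + D * (y i - y (i+1)) := ⟨_, rfl⟩
    have hv' : v = 1 + Y (i+1) * (y i * k - k * y (i+1) + d i * (y i - y (i+1))) := by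
      rw [hv, hu, hk, h1]
      linear_combination (y i - y (i+1)) * h2
    refine ⟨p * u, q * v, y i * k + (y i * k - k * y (i+1) + d i * (y i - y (i+1)))
        + y i * k * Y (i+1) * (y i * k - k * y (i+1) + d i * (y i - y (i+1))),
      A + p • e i, B + q • e i, ?_, ?_, ?_, ?_, ?_⟩
    · intro w
      have : (p * u) • w - (A + p • e i) = p • (u • w - e i) - A := by
        rw [smul_sub, mul_smul]; abel
      rw [this, hp, hsub, hs, mul_smul]
    · intro w
      have : (q * v) • w - (B + q • e i) = q • (v • w - e i) - B := by
        rw [smul_sub, mul_smul]; abel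
      rw [this, hq, hsub, hs, mul_smul]
    · rw [Finset.sum_range_succ, smul_add, ← hAB, ← mul_smul, ← hpq, sub_smul]; abel
    · have hp' : p = q + D * y i := by linear_combination hpq
      rw [hv, hp', hu]
      have : q = 1 + y i * Y (i+1) * k := by rw [hk, h1]
      linear_combination D * y (i+1) * this
    · rw [hv']
      have : q = 1 + y i * Y (i+1) * k := by rw [hk, h1]
      rw [this]; ring

theorem hom_prod_smul {F N M : Type*} [CommRing F] [AddCommGroup N] [Module F N]
    [AddCommGroup M] [Module F M] (l : N → M) (hs : ∀ (f : F) v, l (f • v) = f • l v)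
    (n : ℕ) (y : ℕ → F) (e : ℕ → N) (he : ∀ i v, l (v + e i) = l v) :
    (∏ j ∈ Finset.range n, y j) • l (∑ j ∈ Finset.range n, y j • e j) = 0 := by
  have key : ∀ z : ℕ → F, z n = 1 →
      (∏ j ∈ Finset.range n, z j) • l (∑ j ∈ Finset.range n, z j • e j) = 0 := by
    intro z hz
    obtain ⟨p, q, k, A, B, hp, hq, hAB, hpq, -⟩ := hom_chain l hs n z hz e he
      (∏ j ∈ Finset.range n, z j) (fun i => ∏ j ∈ Finset.Ico i n, z j)
      (fun i => ∏ j ∈ Finset.range (i+1), z j)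
      (fun i hi => Finset.prod_eq_prod_Ico_succ_bot hi z)
      (fun i hi => (Finset.prod_range_mul_prod_Ico z hi).symm) n le_rfl
    rw [hz, mul_one] at hpq
    rw [← hpq, sub_smul, ← hp, ← hq, sub_eq_zero]
    congr 1
    rw [← hpq, sub_smul] at hAB
    rw [sub_eq_sub_iff_add_eq_add] at hAB ⊢
    rw [add_comm _ A, hAB]
  have h := key (fun i => if i = n then 1 else y i) (by simp)
  have e1 : (∏ j ∈ Finset.range n, (if j = n then 1 else y j)) = ∏ j ∈ Finset.range n, y j :=
    Finset.prod_congr rfl fun j hj => if_neg (Finset.mem_range.1 hj).ne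
  have e2 : (∑ j ∈ Finset.range n, (if j = n then 1 else y j) • e j)
      = ∑ j ∈ Finset.range n, y j • e j :=
    Finset.sum_congr rfl fun j hj => by rw [if_neg (Finset.mem_range.1 hj).ne]
  simpa only [e1, e2] using h

theorem hom_zero_seq {F N M : Type*} [CommRing F] [AddCommGroup N] [Module F N]
    [AddCommGroup M] [Module F M] (l : N → M) (hs : ∀ (f : F) v, l (f • v) = f • l v)
    (n : ℕ) (e : ℕ → N) (he : ∀ i v, l (v + e i) = l v) (y : ℕ → F) :
    l (∑ j ∈ Finset.range n, y j • e j) = 0 := by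
  have key : ∀ k m, m + k = n → ∀ y : ℕ → F,
      (∏ j ∈ Finset.range m, y j) • l (∑ j ∈ Finset.range n, y j • e j) = 0 := by
    intro k
    induction k with
    | zero => intro m hm y; obtain rfl : m = n := by omega
              exact hom_prod_smul l hs m y e he
    | succ k ih =>
      intro m hm y
      have h1 := ih (m+1) (by omega) y
      have h2 := ih (m+1) (by omega) (Function.update y m (y m + 1))
      have e1 : (∏ j ∈ Finset.range m, Function.update y m (y m + 1) j)
          = ∏ j ∈ Finset.range m, y j :=
        Finset.prod_congr rfl fun j hj => by
          rw [Function.update_of_ne (Finset.mem_range.1 hj).ne]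
      have e2 : (∑ j ∈ Finset.range n, Function.update y m (y m + 1) j • e j)
          = (∑ j ∈ Finset.range n, y j • e j) + e m := by
        have hmem : m ∈ Finset.range n := Finset.mem_range.2 (by omega)
        rw [← Finset.add_sum_erase _ _ hmem, ← Finset.add_sum_erase (Finset.range n) _ hmem,
          Function.update_self, add_smul, one_smul]
        rw [Finset.sum_congr rfl (g := fun j => y j • e j) fun j hj => by
          rw [Function.update_of_ne (Finset.ne_of_mem_erase hj)]]
        abel
      rw [Finset.prod_range_succ, e1, e2, he, Function.update_self, mul_add, mul_one, add_smul,
        ← Finset.prod_range_succ, h1, zero_add] at h2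
      exact h2
  simpa using key n 0 (by omega) y

theorem hom_zero {F N M : Type*} [CommRing F] [AddCommGroup N] [Module F N]
    [AddCommGroup M] [Module F M] (l : N → M) (hs : ∀ (f : F) v, l (f • v) = f • l v)
    (E : Set N) (he : ∀ e ∈ E, ∀ v, l (v + e) = l v) (v : N) (hv : v ∈ Submodule.span F E) :
    l v = 0 := by
  obtain ⟨n, f, g, rfl⟩ := Submodule.mem_span_set'.1 hv
  have h := hom_zero_seq l hs n (fun i => if h : i < n then (g ⟨i, h⟩ : N) else 0)
    (fun i v => by
      by_cases h : i < n
      · simp only [h, dite_true]; exact he _ (g ⟨i, h⟩).2 v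
      · simp [h]) (fun i => if h : i < n then f ⟨i, h⟩ else 0)
  rw [← h, Finset.sum_range]
  congr 1
  exact Finset.sum_congr rfl fun i _ => by simp

namespace PoissonCalc

section aux

variable {F V Ω1 Ω2 : Type*} [CommRing F] [Algebra ℝ F]
    [AddCommGroup V] [Module F V]
    [AddCommGroup Ω1] [Module ℝ Ω1] [Module F Ω1]
    [AddCommGroup Ω2] [Module ℝ Ω2]
variable (C : PoissonCalc F V Ω1 Ω2)

theorem x_act_zero (X : V) : C.act X 0 = 0 := by
  have := C.act_add X 0 0; simpa using this

theorem x_pair_neg (X : V) (ω : Ω1) : C.pair X (-ω) = - C.pair X ω := by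
  have := C.pair_smul X (-1) ω; simpa using this

theorem x_pair_sub (X : V) (ω θ : Ω1) : C.pair X (ω - θ) = C.pair X ω - C.pair X θ := by
  rw [sub_eq_add_neg, C.pair_add, x_pair_neg, sub_eq_add_neg]

theorem x_act_neg (X : V) (f : F) : C.act X (-f) = - C.act X f := by
  have := C.act_add X f (-f)
  rw [add_neg_cancel, x_act_zero] at this
  linear_combination -this

theorem x_L_zero (X : V) : C.L X 0 = 0 := by
  have := C.L_smul X 0 0; simpa using this

theorem x_pair_zero (X : V) : C.pair X 0 = 0 := by
  have := C.pair_smul X 0 0; simpa using this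

theorem x_iota_zero (X : V) : C.ι2 X 0 = 0 := by
  have := C.cartan X 0
  rw [x_L_zero, x_pair_zero, map_zero, map_zero, add_zero] at this
  exact this.symm

theorem x_L_d0 (X : V) (g : F) : C.L X (C.d0 g) = C.d0 (C.act X g) := by
  rw [C.cartan, C.d1_d0, x_iota_zero, zero_add, C.pair_d0]

theorem x_L_add_d0 (X : V) (ω : Ω1) (g : F) :
    C.L X (ω + C.d0 g) = C.L X ω + C.d0 (C.act X g) := by
  rw [C.cartan, C.cartan, map_add, C.d1_d0, add_zero, C.pair_add, map_add, C.pair_d0, add_assoc]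

theorem x_L_add (X : V) (ω θ : Ω1) : C.L X (ω + θ) = C.L X ω + C.L X θ := by
  have h := hom_zero (F := F) (fun p : Ω1 × Ω1 => C.L X (p.1 + p.2) - C.L X p.1 - C.L X p.2)
    (fun f p => by
      simp only [Prod.smul_fst, Prod.smul_snd, ← smul_add, C.L_smul]
      simp only [smul_add, smul_sub]
      abel)
    (Set.range fun p : F × F => (C.d0 p.1, C.d0 p.2))
    (by
      rintro _ ⟨⟨g, h⟩, rfl⟩ ⟨a, b⟩
      have : a + C.d0 g + (b + C.d0 h) = a + b + C.d0 g + C.d0 h := by abel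
      simp only [Prod.mk_add_mk, this, x_L_add_d0]
      abel)
    (ω, θ) (by
      have h1 : ∀ ω : Ω1, ((ω, 0) : Ω1 × Ω1) ∈
          Submodule.span F (Set.range fun p : F × F => (C.d0 p.1, C.d0 p.2)) := by
        intro ω
        refine Submodule.span_induction (p := fun ω _ => ((ω, 0) : Ω1 × Ω1) ∈
          Submodule.span F (Set.range fun p : F × F => (C.d0 p.1, C.d0 p.2)))
          ?_ ?_ ?_ ?_ (C.span_exact ω)
        · rintro _ ⟨g, rfl⟩
          exact Submodule.subset_span ⟨(g, 0), by simp⟩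
        · exact Submodule.zero_mem _
        · intro a b _ _ ha hb; simpa using Submodule.add_mem _ ha hb
        · intro f a _ ha; simpa using Submodule.smul_mem _ f ha
      have h2 : ∀ ω : Ω1, ((0, ω) : Ω1 × Ω1) ∈
          Submodule.span F (Set.range fun p : F × F => (C.d0 p.1, C.d0 p.2)) := by
        intro ω
        refine Submodule.span_induction (p := fun ω _ => ((0, ω) : Ω1 × Ω1) ∈
          Submodule.span F (Set.range fun p : F × F => (C.d0 p.1, C.d0 p.2)))
          ?_ ?_ ?_ ?_ (C.span_exact ω)
        · rintro _ ⟨g, rfl⟩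
          exact Submodule.subset_span ⟨(0, g), by simp⟩
        · exact Submodule.zero_mem _
        · intro a b _ _ ha hb; simpa using Submodule.add_mem _ ha hb
        · intro f a _ ha; simpa using Submodule.smul_mem _ f ha
      simpa using Submodule.add_mem _ (h1 ω) (h2 θ))
  simp only [sub_sub, sub_eq_zero] at h
  exact h

theorem x_L_neg (X : V) (ω : Ω1) : C.L X (-ω) = - C.L X ω := by
  have := C.x_L_add X ω (-ω)
  rw [add_neg_cancel, x_L_zero] at this
  exact (neg_eq_of_add_eq_zero_right this.symm).symm

theorem x_L_sub (X : V) (ω θ : Ω1) : C.L X (ω - θ) = C.L X ω - C.L X θ := by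
  rw [sub_eq_add_neg, x_L_add, x_L_neg, sub_eq_add_neg]

theorem x_ind (P : Ω1 → Prop) (h0 : ∀ g, P (C.d0 g)) (ha : ∀ a b, P a → P b → P (a + b))
    (hs : ∀ (f : F) a, P a → P (f • a)) (ω : Ω1) : P ω := by
  refine Submodule.span_induction (p := fun ω _ => P ω) ?_ ?_ ?_ ?_ (C.span_exact ω)
  · rintro _ ⟨g, rfl⟩; exact h0 g
  · have := h0 0; rwa [map_zero] at this
  · intro a b _ _; exact ha a b
  · intro f a _; exact hs f a

theorem x_L_ext {X Y : V} (h : ∀ f, C.act X f = C.act Y f) (ω : Ω1) : C.L X ω = C.L Y ω := by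
  refine C.x_ind (fun ω => C.L X ω = C.L Y ω) ?_ ?_ ?_ ω
  · intro g; rw [x_L_d0, x_L_d0, h]
  · intro a b ha hb; rw [x_L_add, x_L_add, ha, hb]
  · intro f a ha; rw [C.L_smul, C.L_smul, ha, h]

theorem x_L_addV (X Y : V) (ω : Ω1) : C.L (X + Y) ω = C.L X ω + C.L Y ω := by
  refine C.x_ind (fun ω => C.L (X + Y) ω = C.L X ω + C.L Y ω) ?_ ?_ ?_ ω
  · intro g; rw [x_L_d0, x_L_d0, x_L_d0, C.act_addV, map_add]
  · intro a b ha hb; rw [x_L_add, x_L_add, x_L_add, ha, hb]; abel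
  · intro f a ha; rw [C.L_smul, C.L_smul, C.L_smul, ha, C.act_addV, add_smul, smul_add]; abel

theorem x_pair_ext {X Y : V} (h : ∀ f, C.act X f = C.act Y f) (ω : Ω1) :
    C.pair X ω = C.pair Y ω := by
  refine C.x_ind (fun ω => C.pair X ω = C.pair Y ω) ?_ ?_ ?_ ω
  · intro g; rw [C.pair_d0, C.pair_d0, h]
  · intro a b ha hb; rw [C.pair_add, C.pair_add, ha, hb]
  · intro f a ha; rw [C.pair_smul, C.pair_smul, ha]

theorem x_pair_lie_swap (X Y : V) (ω : Ω1) :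
    C.pair (C.lieV X Y) ω = - C.pair (C.lieV Y X) ω := by
  refine C.x_ind (fun ω => C.pair (C.lieV X Y) ω = - C.pair (C.lieV Y X) ω) ?_ ?_ ?_ ω
  · intro g; rw [C.pair_d0, C.pair_d0, C.act_lieV, C.act_lieV]; ring
  · intro a b ha hb; rw [C.pair_add, C.pair_add, ha, hb]; ring
  · intro f a ha; rw [C.pair_smul, C.pair_smul, ha]; ring

theorem x_pair_lie_smul (f : F) (Y Z : V) (ω : Ω1) :
    C.pair (C.lieV (f • Y) Z) ω = f * C.pair (C.lieV Y Z) ω - C.act Z f * C.pair Y ω := by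
  refine C.x_ind (fun ω => C.pair (C.lieV (f • Y) Z) ω
    = f * C.pair (C.lieV Y Z) ω - C.act Z f * C.pair Y ω) ?_ ?_ ?_ ω
  · intro g
    rw [C.pair_d0, C.pair_d0, C.pair_d0, C.act_lieV, C.act_lieV, C.act_smulV, C.act_smulV,
      C.act_mul]; ring
  · intro a b ha hb; rw [C.pair_add, C.pair_add, C.pair_add, ha, hb]; ring
  · intro h a ha; rw [C.pair_smul, C.pair_smul, C.pair_smul, ha]; ring

theorem x_pair_L_smulV (Z Y : V) (f : F) (ω : Ω1) :
    C.pair Z (C.L (f • Y) ω) = f * C.pair Z (C.L Y ω) + C.act Z f * C.pair Y ω := by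
  have h1 := C.L_pair (f • Y) Z ω
  have h2 := C.L_pair Y Z ω
  rw [x_pair_lie_smul, C.act_smulV] at h1
  linear_combination f * h2 - h1

theorem x_kbr_skew (ω θ : Ω1) : C.kbr ω θ = - C.kbr θ ω := by
  have : C.piv ω θ = - C.piv θ ω := C.pair_sharp_skew ω θ
  rw [kbr, kbr, this, map_neg]; abel

theorem x_kbr_add (ω θ η : Ω1) : C.kbr ω (θ + η) = C.kbr ω θ + C.kbr ω η := by
  simp only [kbr, piv, C.sharp_add, C.pair_add, x_L_add, x_L_addV, map_add]; abel

theorem x_pair_kbr_smul (Z : V) (ω θ : Ω1) (f : F) :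
    C.pair Z (C.kbr ω (f • θ))
      = f * C.pair Z (C.kbr ω θ) + C.act (C.sharp ω) f * C.pair Z θ := by
  simp only [kbr, piv, x_pair_sub, C.sharp_smul, C.L_smul, C.pair_add, C.pair_smul,
    x_pair_L_smulV, C.pair_d0, C.act_mul]
  rw [C.pair_sharp_skew θ ω]; ring

theorem x_kbr_d0 (f g : F) :
    C.kbr (C.d0 f) (C.d0 g) = C.d0 (C.pair (C.sharp (C.d0 f)) (C.d0 g)) := by
  have h := C.pair_sharp_skew (C.d0 f) (C.d0 g)
  rw [kbr, piv, x_L_d0, x_L_d0, ← C.pair_d0, ← C.pair_d0, h, map_neg]; abel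

theorem x_act_sharp (α : Ω1) (h : F) :
    C.act (C.sharp α) h = - C.pair (C.sharp (C.d0 h)) α := by
  rw [← C.pair_d0, C.pair_sharp_skew]

theorem x_hom_step (ω : Ω1)
    (h0 : ∀ g h, C.act (C.sharp (C.kbr ω (C.d0 g))) h
      = C.act (C.lieV (C.sharp ω) (C.sharp (C.d0 g))) h) (θ : Ω1) :
    ∀ h, C.act (C.sharp (C.kbr ω θ)) h = C.act (C.lieV (C.sharp ω) (C.sharp θ)) h := by
  refine C.x_ind (fun θ => ∀ h, C.act (C.sharp (C.kbr ω θ)) h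
    = C.act (C.lieV (C.sharp ω) (C.sharp θ)) h) h0 ?_ ?_ θ
  · intro a b ha hb h
    rw [x_kbr_add, C.sharp_add, C.act_addV, ha, hb]
    simp only [C.act_lieV, C.sharp_add, C.act_addV, C.act_add]; ring
  · intro f a ha h
    have h1 := ha h
    rw [x_act_sharp, C.act_lieV] at h1
    rw [x_act_sharp, x_pair_kbr_smul, C.act_lieV]
    simp only [C.sharp_smul, C.act_smulV, C.act_mul]
    have h2 := C.x_act_sharp a h
    linear_combination f * h1 - C.act (C.sharp ω) f * h2

theorem x_hom (ω θ : Ω1) (h : F) :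
    C.act (C.sharp (C.kbr ω θ)) h = C.act (C.lieV (C.sharp ω) (C.sharp θ)) h := by
  refine C.x_hom_step ω (fun g h => ?_) θ h
  have h1 := C.x_hom_step (C.d0 g)
    (fun g' h => by rw [x_kbr_d0, C.sharp_hamiltonian]) ω h
  rw [x_act_sharp, C.act_lieV] at h1
  rw [x_kbr_skew, x_act_sharp, x_pair_neg, C.act_lieV]
  linear_combination -h1

theorem x_cyc (ω θ η : Ω1) :
    C.act (C.sharp ω) (C.pair (C.sharp θ) η) + C.act (C.sharp θ) (C.pair (C.sharp η) ω)
      + C.act (C.sharp η) (C.pair (C.sharp ω) θ)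
    = C.pair (C.lieV (C.sharp ω) (C.sharp θ)) η + C.pair (C.lieV (C.sharp η) (C.sharp ω)) θ
      + C.pair (C.lieV (C.sharp θ) (C.sharp η)) ω := by
  have h1 : C.pair (C.lieV (C.sharp ω) (C.sharp θ)) η = - C.pair (C.sharp η) (C.kbr ω θ) := by
    rw [← C.x_pair_ext (C.x_hom ω θ), C.pair_sharp_skew]
  rw [kbr, piv, x_pair_sub, x_pair_sub, C.pair_d0] at h1
  have h2 := C.L_pair (C.sharp ω) (C.sharp η) θ
  have h3 := C.L_pair (C.sharp θ) (C.sharp η) ω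
  rw [C.pair_sharp_skew η θ, x_act_neg, x_pair_lie_swap] at h2
  linear_combination -h1 + h3 - h2

theorem x_jacobi (ω θ η : Ω1) :
    C.kbr ω (C.kbr θ η) = C.kbr (C.kbr ω θ) η + C.kbr θ (C.kbr ω η) := by
  have e1 : C.kbr ω (C.kbr θ η) = C.L (C.sharp ω) (C.kbr θ η)
      - C.L (C.lieV (C.sharp θ) (C.sharp η)) ω - C.d0 (C.pair (C.sharp ω) (C.kbr θ η)) := by
    rw [← C.x_L_ext (C.x_hom θ η)]; rfl
  have e2 : C.kbr (C.kbr ω θ) η = C.L (C.lieV (C.sharp ω) (C.sharp θ)) η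
      - C.L (C.sharp η) (C.kbr ω θ) - C.d0 (C.pair (C.lieV (C.sharp ω) (C.sharp θ)) η) := by
    rw [← C.x_L_ext (C.x_hom ω θ), ← C.x_pair_ext (C.x_hom ω θ)]; rfl
  have e3 : C.kbr θ (C.kbr ω η) = C.L (C.sharp θ) (C.kbr ω η)
      - C.L (C.lieV (C.sharp ω) (C.sharp η)) θ - C.d0 (C.pair (C.sharp θ) (C.kbr ω η)) := by
    rw [← C.x_L_ext (C.x_hom ω η)]; rfl
  rw [e1, e2, e3]
  simp only [kbr, piv, x_L_sub, C.L_lieV, x_L_d0]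
  have key : C.d0 (C.act (C.sharp ω) (C.pair (C.sharp θ) η))
        + C.d0 (C.pair (C.sharp ω)
          (C.L (C.sharp θ) η - C.L (C.sharp η) θ - C.d0 (C.pair (C.sharp θ) η)))
      = - C.d0 (C.act (C.sharp η) (C.pair (C.sharp ω) θ))
        + C.d0 (C.pair (C.lieV (C.sharp ω) (C.sharp θ)) η)
        + C.d0 (C.act (C.sharp θ) (C.pair (C.sharp ω) η))
        + C.d0 (C.pair (C.sharp θ)
          (C.L (C.sharp ω) η - C.L (C.sharp η) ω - C.d0 (C.pair (C.sharp ω) η))) := by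
    rw [← map_neg, ← map_add, ← map_add, ← map_add, ← map_add]
    congr 1
    simp only [x_pair_sub, C.pair_d0]
    have h1 := C.L_pair (C.sharp θ) (C.sharp ω) η
    have h2 := C.L_pair (C.sharp η) (C.sharp ω) θ
    have h3 := C.L_pair (C.sharp ω) (C.sharp θ) η
    have h4 := C.L_pair (C.sharp η) (C.sharp θ) ω
    rw [C.pair_sharp_skew θ ω, x_act_neg, x_pair_lie_swap] at h4
    rw [x_pair_lie_swap, C.pair_sharp_skew ω η, x_act_neg] at h1
    have h5 := C.x_cyc ω θ η
    linear_combination -h1 + h2 + h3 - h4 - h5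

  rw [← sub_eq_zero] at key ⊢
  rw [← neg_eq_zero, ← key]
  abel

end aux

end PoissonCalc


/-- On a Poisson manifold `P` with Poisson bivector `π`, the
bracket on one-forms `[ω,θ] = L_{X_ω}θ - L_{X_θ}ω - d(π(ω,θ))`, where
`X_ω = π^♯ω`, is antisymmetric and satisfies the Jacobi identity, making
`Ω^1(P)` a Lie algebra. -/
theorem koszul_bracket_is_lie_algebra
    {F V Ω1 Ω2 : Type*} [CommRing F] [Algebra ℝ F]
    [AddCommGroup V] [Module F V]
    [AddCommGroup Ω1] [Module ℝ Ω1] [Module F Ω1]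
    [AddCommGroup Ω2] [Module ℝ Ω2]
    (C : PoissonCalc F V Ω1 Ω2) :
    (∀ ω θ : Ω1, C.kbr ω θ = - C.kbr θ ω) ∧
    (∀ ω θ η : Ω1,
      C.kbr ω (C.kbr θ η) = C.kbr (C.kbr ω θ) η + C.kbr θ (C.kbr ω η)) := by
  exact ⟨C.x_kbr_skew, C.x_jacobi⟩
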